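/- For any graph G, γ(G)/2 ≤ ir(G) ≤ γ(G) ≤ 2·ir(G) − 1. -/

import Mathlib

variable {V : Type*} [Fintype V] [DecidableEq V]

/-- `S` is a dominating set of `G`: every vertex outside `S` has a neighbor in `S`. -/
def IsDomSet (G : SimpleGraph V) (S : Finset V) : Prop :=
  ∀ v : V, v ∉ S → ∃ u ∈ S, G.Adj u v

/-- The domination number: minimum cardinality of a dominating set. -/
noncomputable def domNum (G : SimpleGraph V) : ℕ :=
  sInf {n | ∃ S : Finset V, IsDomSet G S ∧ S.card = n}

/-- `v` has a private neighbor with respect to `S`: some vertex of the closed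
neighborhood of `v` lies outside the closed neighborhood of `S \ {v}`. -/
def HasPrivateNbr (G : SimpleGraph V) (S : Finset V) (v : V) : Prop :=
  ∃ w : V, (w = v ∨ G.Adj v w) ∧ ∀ u ∈ S, u ≠ v → ¬ (w = u ∨ G.Adj u w)

/-- `S` is irredundant: every vertex of `S` has a private neighbor. -/
def IsIrredundant (G : SimpleGraph V) (S : Finset V) : Prop :=
  ∀ v ∈ S, HasPrivateNbr G S v

/-- `S` is a maximal irredundant set of `G`. -/
def IsMaximalIrredundant (G : SimpleGraph V) (S : Finset V) : Prop :=
  IsIrredundant G S ∧ ∀ T : Finset V, S ⊂ T → ¬ IsIrredundant G T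

/-- The irredundance number: minimum cardinality of a maximal irredundant set. -/
noncomputable def irNum (G : SimpleGraph V) : ℕ :=
  sInf {n | ∃ S : Finset V, IsMaximalIrredundant G S ∧ S.card = n}

/-- The upper irredundance number: maximum cardinality of a maximal irredundant set. -/
noncomputable def upperIrNum (G : SimpleGraph V) : ℕ :=
  sSup {n | ∃ S : Finset V, IsMaximalIrredundant G S ∧ S.card = n}

/-- `S` is an independent set of `G`. -/
def IsIndepSet (G : SimpleGraph V) (S : Finset V) : Prop :=
  ∀ u ∈ S, ∀ v ∈ S, ¬ G.Adj u v

/-- `S` is a maximal independent set of `G`. -/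
def IsMaximalIndepSet (G : SimpleGraph V) (S : Finset V) : Prop :=
  IsIndepSet G S ∧ ∀ T : Finset V, S ⊂ T → ¬ IsIndepSet G T

/-- The independent domination number: minimum cardinality of a maximal independent set. -/
noncomputable def indepDomNum (G : SimpleGraph V) : ℕ :=
  sInf {n | ∃ S : Finset V, IsMaximalIndepSet G S ∧ S.card = n}

/-- The independence number: maximum cardinality of an independent set. -/
noncomputable def indepNum (G : SimpleGraph V) : ℕ :=
  sSup {n | ∃ S : Finset V, IsIndepSet G S ∧ S.card = n}

/-- `S` is a minimal dominating set of `G`. -/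
def IsMinimalDomSet (G : SimpleGraph V) (S : Finset V) : Prop :=
  IsDomSet G S ∧ ∀ T : Finset V, T ⊂ S → ¬ IsDomSet G T

/-- The upper domination number: maximum cardinality of a minimal dominating set. -/
noncomputable def upperDomNum (G : SimpleGraph V) : ℕ :=
  sSup {n | ∃ S : Finset V, IsMinimalDomSet G S ∧ S.card = n}

theorem aux_dom_erase (G : SimpleGraph V) (T : Finset V) (hT : IsDomSet G T) (v : V)
    (hv : ¬ HasPrivateNbr G T v) : IsDomSet G (T.erase v) := by
  intro x hx
  have key : (x = v ∨ G.Adj v x) → ∃ u ∈ T.erase v, G.Adj u x := by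
    intro h1
    by_contra hcon
    refine hv ⟨x, h1, fun u hu huv h2 => ?_⟩
    have hu' : u ∈ T.erase v := Finset.mem_erase.2 ⟨huv, hu⟩
    rcases h2 with rfl | h2
    · exact hx hu'
    · exact hcon ⟨u, hu', h2⟩
  by_cases hxv : x = v
  · exact key (Or.inl hxv)
  · have hxT : x ∉ T := fun h => hx (Finset.mem_erase.2 ⟨hxv, h⟩)
    obtain ⟨u, hu, hux⟩ := hT x hxT
    by_cases huv : u = v
    · subst huv
      exact key (Or.inr hux)
    · exact ⟨u, Finset.mem_erase.2 ⟨huv, hu⟩, hux⟩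

theorem aux_domNum_le (G : SimpleGraph V) (T : Finset V) (hT : IsDomSet G T) :
    domNum G ≤ T.card := Nat.sInf_le ⟨T, hT, rfl⟩

theorem aux_domNum_mem (G : SimpleGraph V) : ∃ S : Finset V, IsDomSet G S ∧ S.card = domNum G :=
  Nat.sInf_mem (s := {n | ∃ S : Finset V, IsDomSet G S ∧ S.card = n})
    ⟨_, Finset.univ, fun v hv => absurd (Finset.mem_univ v) hv, rfl⟩

theorem aux_min_dom (G : SimpleGraph V) (D : Finset V) (hD : IsDomSet G D)
    (hc : D.card = domNum G) : IsMaximalIrredundant G D := by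
  constructor
  · intro v hv
    by_contra hp
    have h1 := aux_domNum_le G _ (aux_dom_erase G D hD v hp)
    have h2 := Finset.card_erase_lt_of_mem hv
    omega
  · intro T hDT hT
    obtain ⟨v, hvT, hvD⟩ := Finset.exists_of_ssubset hDT
    obtain ⟨w, -, hw⟩ := hT v hvT
    by_cases hwD : w ∈ D
    · exact hw w (hDT.1 hwD) (fun e => hvD (e ▸ hwD)) (Or.inl rfl)
    · obtain ⟨u, hu, huw⟩ := hD w hwD
      exact hw u (hDT.1 hu) (fun e => hvD (e ▸ hu)) (Or.inr huw)

theorem aux_double (G : SimpleGraph V) (S : Finset V) (hS : IsMaximalIrredundant G S) :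
    ∃ T : Finset V, S ⊆ T ∧ IsDomSet G T ∧ T.card ≤ 2 * S.card := by
  obtain ⟨hI, hmax⟩ := hS
  choose! p hp1 hp2 using hI
  refine ⟨S ∪ S.image p, Finset.subset_union_left, ?_, ?_⟩
  · intro w hw
    by_contra hcon
    push Not at hcon
    have hwS : w ∉ S := fun h => hw (Finset.mem_union_left _ h)
    refine hmax (insert w S) (Finset.ssubset_insert hwS) ?_
    intro v hv
    rcases Finset.mem_insert.1 hv with rfl | hv
    · refine ⟨v, Or.inl rfl, fun u hu huv h2 => ?_⟩
      rcases h2 with h2 | h2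
      · exact huv h2.symm
      · exact hcon u (Finset.mem_union_left _ (Finset.mem_of_mem_insert_of_ne hu huv)) h2
    · have hpv : p v ∈ S ∪ S.image p :=
        Finset.mem_union_right _ (Finset.mem_image_of_mem p hv)
      refine ⟨p v, hp1 v hv, fun u hu huv h2 => ?_⟩
      rcases Finset.mem_insert.1 hu with rfl | hu
      · rcases h2 with h2 | h2
        · exact hw (h2 ▸ hpv)
        · exact hcon _ hpv h2.symm
      · exact hp2 v hv u hu huv h2
  · have h1 := Finset.card_union_le S (S.image p)
    have h2 : (S.image p).card ≤ S.card := Finset.card_image_le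
    omega

/-- For any graph `G` (with no isolated vertices),
`γ(G)/2 ≤ ir(G) ≤ γ(G) ≤ 2·ir(G) − 1`. -/
theorem domNum_irNum_bounds (G : SimpleGraph V) (h : ∀ v : V, ∃ u : V, G.Adj v u) :
    domNum G ≤ 2 * irNum G ∧ irNum G ≤ domNum G ∧ domNum G ≤ 2 * irNum G - 1 := by
  obtain ⟨D, hD, hDc⟩ := aux_domNum_mem G
  have hDm := aux_min_dom G D hD hDc
  have hle : irNum G ≤ domNum G := Nat.sInf_le ⟨D, hDm, hDc⟩
  obtain ⟨S, hS, hSc⟩ : ∃ S : Finset V, IsMaximalIrredundant G S ∧ S.card = irNum G :=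
    Nat.sInf_mem (s := {n | ∃ S : Finset V, IsMaximalIrredundant G S ∧ S.card = n})
      ⟨_, D, hDm, rfl⟩
  obtain ⟨T, hST, hT, hTc⟩ := aux_double G S hS
  have hTd := aux_domNum_le G T hT
  refine ⟨by omega, hle, ?_⟩
  by_cases heq : S = T
  · have : S.card = T.card := by rw [← heq]
    omega
  · have hnot := hS.2 T (Finset.ssubset_iff_subset_ne.2 ⟨hST, heq⟩)
    unfold IsIrredundant at hnot
    push Not at hnot
    obtain ⟨v, hv, hvp⟩ := hnot
    have h1 := aux_domNum_le G _ (aux_dom_erase G T hT v hvp)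
    have h2 := Finset.card_erase_lt_of_mem hv
    omega
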